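/- Let E be a Fréchet space whose topology is generated by an increasing sequence of seminorms (‖·‖_k), let ℓ₁, ℓ₂, ℓ₃ be Banach sequence spaces with monotone norm, and let A = (a_v^k), B = (b_i^k), C = (c_j^k) be Köthe matrices with B satisfying the Grothendieck–Pietsch nuclearity condition (for every k there is m with Σ_i b_i^k/b_i^m < ∞). Assume (E, λ^{ℓ₁}(A)) ∈ 𝓑 and (λ^{ℓ₂}(B), λ^{ℓ₃}(C)) ∈ 𝓑. Then for every non-decreasing function N : ℕ → ℕ there exists m ∈ ℕ such that for each r ∈ ℕ there exist s ∈ ℕ and C₀ > 0 with c_j^r · ‖u‖*_m ≤ C₀ · (max_{1 ≤ k ≤ s} c_j^k / (a_v^{N(k)} b_i^{N(k)})) · (max_{1 ≤ k ≤ s} ‖u‖*_{N(k)} · a_v^k · b_i^k) for all j, v, i ∈ ℕ and all u ∈ E′. -/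

import Mathlib

/-! The estimate combines two inequalities of Vogt type. If every continuous operator from `X` to
`λ^ℓ(A)` is bounded, then for every non-decreasing `N` there is `m` such that each `r` admits
`s` and `C` with `a_v^r ‖u‖*_m ≤ C max_{1≤k≤s} a_v^k ‖u‖*_{N(k)}` for all `v` and `u ∈ X′`
(`rank_one_estimate`). Otherwise one chooses rank one operators `u_n ⊗ e_{v_n}` which are small
in the continuity estimates prescribed by `N` but unbounded in `‖·‖_{r_m,m}` for every `m`.
For every bounded `θ` the operator `∑ θ_n u_n ⊗ e_{v_n}` is then continuous, hence bounded, and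
Baire's theorem in `ℓ^∞` gives a single `m` with `sup_n ‖u_n ⊗ e_{v_n}‖_{r_m,m} < ∞`
(`exists_uniform_bound`), a contradiction.

For `X = λ^{ℓ₂}(B)` and `u` the `i`-th coordinate, `‖u‖*_k = 1 / b_i^k`, so the inequality reads
`c_j^r / b_i^m ≤ C max_k c_j^k / b_i^{N(k)}` (`kothe_estimate`). The inequality for
`(E, λ^{ℓ₁}(A))` is then applied to the function `k ↦ N (max k m)`, with this `m`; the maximum
makes it possible to absorb the remaining factor `b_i^m` into `b_i^k`. -/

open scoped ENNReal BigOperators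

/-- The `n`-th canonical unit sequence in `ℝ^ℕ`. -/
def eSeq (n : ℕ) : ℕ → ℝ := fun m => if m = n then 1 else 0

/-- Unconditional (finite-partial-sums) convergence of the series `∑ n, f n` to `y`,
with respect to the norm `nn`. -/
def HasSumIn (nn : (ℕ → ℝ) → ℝ) (f : ℕ → ℕ → ℝ) (y : ℕ → ℝ) : Prop :=
  ∀ ε : ℝ, 0 < ε → ∃ F : Finset ℕ, ∀ G : Finset ℕ, F ⊆ G → nn ((∑ n ∈ G, f n) - y) < ε

/-- A Banach sequence space with a monotone norm in which the canonical system `(eSeq n)`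
is an unconditional basis. -/
structure MonoBanachSeqSpace where
  mem : (ℕ → ℝ) → Prop
  nrm : (ℕ → ℝ) → ℝ
  mem_zero : mem 0
  mem_add : ∀ {x y}, mem x → mem y → mem (x + y)
  mem_smul : ∀ (c : ℝ) {x}, mem x → mem (c • x)
  nrm_nonneg : ∀ x, mem x → 0 ≤ nrm x
  nrm_eq_zero_iff : ∀ {x}, mem x → (nrm x = 0 ↔ x = 0)
  nrm_add_le : ∀ {x y}, mem x → mem y → nrm (x + y) ≤ nrm x + nrm y
  nrm_smul : ∀ (c : ℝ) {x}, mem x → nrm (c • x) = |c| * nrm x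
  complete : ∀ u : ℕ → ℕ → ℝ, (∀ n, mem (u n)) →
    (∀ ε : ℝ, 0 < ε → ∃ M, ∀ p q, M ≤ p → M ≤ q → nrm (u p - u q) < ε) →
    ∃ x, mem x ∧ ∀ ε : ℝ, 0 < ε → ∃ M, ∀ p, M ≤ p → nrm (u p - x) < ε
  mem_e : ∀ n, mem (eSeq n)
  nrm_e : ∀ n, nrm (eSeq n) = 1
  mem_mul : ∀ (β : ℕ → ℝ) {x}, mem x → (∀ n, |β n| ≤ 1) → mem fun n => β n * x n
  expand : ∀ {x : ℕ → ℝ} (β : ℕ → ℝ), mem x → (∀ n, |β n| ≤ 1) →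
    HasSumIn nrm (fun n => (β n * x n) • eSeq n) (fun n => β n * x n)
  mono : ∀ {x y}, mem x → mem y → (∀ n, |x n| ≤ |y n|) → nrm x ≤ nrm y

/-- A Köthe matrix over a countable index set. -/
def IsKotheMatrix {ι : Type*} (a : ι → ℕ → ℝ) : Prop :=
  ∀ n k, 0 < a n k ∧ a n k ≤ a n (k + 1)

/-- Membership in the Köthe space `λ(a)`. -/
def memLam {ι : Type*} (a : ι → ℕ → ℝ) (x : ι → ℝ) : Prop :=
  ∀ k, Summable fun n => |x n| * a n k

/-- The `k`-th seminorm of the Köthe space `λ(a)`. -/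
noncomputable def lamNorm {ι : Type*} (a : ι → ℕ → ℝ) (k : ℕ) (x : ι → ℝ) : ℝ :=
  ∑' n, |x n| * a n k

/-- Membership in the `ℓ`-Köthe space `λ^ℓ(b)`. -/
def memLamL (l : MonoBanachSeqSpace) (b : ℕ → ℕ → ℝ) (x : ℕ → ℝ) : Prop :=
  ∀ k, l.mem fun n => x n * b n k

/-- The `k`-th seminorm of the `ℓ`-Köthe space `λ^ℓ(b)`. -/
noncomputable def lamLNorm (l : MonoBanachSeqSpace) (b : ℕ → ℕ → ℝ) (k : ℕ) (x : ℕ → ℝ) : ℝ :=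
  l.nrm fun n => x n * b n k

/-- The operator seminorm `‖T‖_{pY,pX} = sup {pY (T x) : x ∈ memX, pX x ≤ 1}`,
with values in `ℝ≥0∞`. -/
noncomputable def opSeminorm {X Y : Type*} (memX : X → Prop) (pX : X → ℝ) (pY : Y → ℝ)
    (T : X → Y) : ℝ≥0∞ :=
  ⨆ x : {x : X // memX x ∧ pX x ≤ 1}, ENNReal.ofReal (pY (T x.1))

/-- The dual seminorm `‖u‖*_k = sup {|u x| : p k x ≤ 1}` of a linear functional,
with values in `ℝ≥0∞`. -/
noncomputable def dualNorm {E : Type*} [AddCommGroup E] [Module ℝ E]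
    (p : ℕ → Seminorm ℝ E) (k : ℕ) (u : E →ₗ[ℝ] ℝ) : ℝ≥0∞ :=
  ⨆ x : {x : E // p k x ≤ 1}, ENNReal.ofReal |u x.1|

/-- `max_{1 ≤ k ≤ k₀} f k` for a real-valued `f`. -/
noncomputable def maxIcc (k₀ : ℕ) (h : 1 ≤ k₀) (f : ℕ → ℝ) : ℝ :=
  (Finset.Icc 1 k₀).sup' (Finset.nonempty_Icc.mpr h) f

/-! ### The Banach space underlying a sequence space -/

/-- The sequence space as a submodule of `ℝ^ℕ`. -/
def seqSub (l : MonoBanachSeqSpace) : Submodule ℝ (ℕ → ℝ) where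
  carrier := {x | l.mem x}
  zero_mem' := l.mem_zero
  add_mem' := fun hx hy => l.mem_add hx hy
  smul_mem' := fun c _ hx => l.mem_smul c hx

/-- The sequence space as a type of its own. A synonym of the submodule is used because the
submodule itself inherits the product topology of `ℝ^ℕ`, which is not the norm topology. -/
def SeqCarrier (l : MonoBanachSeqSpace) : Type := seqSub l

instance (l : MonoBanachSeqSpace) : AddCommGroup (SeqCarrier l) :=
  inferInstanceAs (AddCommGroup (seqSub l))

instance (l : MonoBanachSeqSpace) : Module ℝ (SeqCarrier l) :=
  inferInstanceAs (Module ℝ (seqSub l))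

/-- The inclusion of the sequence space into `ℝ^ℕ`. -/
def seqVal (l : MonoBanachSeqSpace) : SeqCarrier l →ₗ[ℝ] (ℕ → ℝ) := (seqSub l).subtype

lemma seqVal_mem (l : MonoBanachSeqSpace) (x : SeqCarrier l) : l.mem (seqVal l x) := x.2

/-- An element of the sequence space from a member sequence. -/
def seqMk (l : MonoBanachSeqSpace) (x : ℕ → ℝ) (hx : l.mem x) : SeqCarrier l := ⟨x, hx⟩

@[simp] lemma seqVal_mk (l : MonoBanachSeqSpace) (x : ℕ → ℝ) (hx : l.mem x) :
    seqVal l (seqMk l x hx) = x := rfl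

instance (l : MonoBanachSeqSpace) : Norm (SeqCarrier l) := ⟨fun x => l.nrm (seqVal l x)⟩

lemma seq_norm_def (l : MonoBanachSeqSpace) (x : SeqCarrier l) : ‖x‖ = l.nrm (seqVal l x) := rfl

lemma seqCore (l : MonoBanachSeqSpace) : NormedSpace.Core ℝ (SeqCarrier l) where
  norm_nonneg x := l.nrm_nonneg _ (seqVal_mem l x)
  norm_smul c x := by
    rw [seq_norm_def, seq_norm_def, map_smul, l.nrm_smul c (seqVal_mem l x), Real.norm_eq_abs]
  norm_triangle x y := by
    rw [seq_norm_def, map_add]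
    exact l.nrm_add_le (seqVal_mem l x) (seqVal_mem l y)
  norm_eq_zero_iff x := by
    rw [seq_norm_def, l.nrm_eq_zero_iff (seqVal_mem l x)]
    constructor
    · intro h
      exact Subtype.ext h
    · rintro rfl
      exact map_zero _

noncomputable instance (l : MonoBanachSeqSpace) : NormedAddCommGroup (SeqCarrier l) :=
  NormedAddCommGroup.ofCore (seqCore l)

noncomputable instance (l : MonoBanachSeqSpace) : NormedSpace ℝ (SeqCarrier l) :=
  NormedSpace.ofCore (seqCore l)

instance (l : MonoBanachSeqSpace) : CompleteSpace (SeqCarrier l) := by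
  apply Metric.complete_of_cauchySeq_tendsto
  intro u hu
  rw [Metric.cauchySeq_iff] at hu
  obtain ⟨x, hx, hlim⟩ := l.complete (fun n => seqVal l (u n)) (fun n => seqVal_mem l _) (by
    intro ε hε
    obtain ⟨M, hM⟩ := hu ε hε
    refine ⟨M, fun p q hp hq => ?_⟩
    have := hM p hp q hq
    rwa [dist_eq_norm, seq_norm_def, map_sub] at this)
  refine ⟨seqMk l x hx, ?_⟩
  rw [Metric.tendsto_atTop]
  intro ε hε
  obtain ⟨M, hM⟩ := hlim ε hε
  refine ⟨M, fun n hn => ?_⟩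
  rw [dist_eq_norm, seq_norm_def, map_sub]
  exact hM n hn

lemma abs_coord_le (l : MonoBanachSeqSpace) {x : ℕ → ℝ} (hx : l.mem x) (n : ℕ) :
    |x n| ≤ l.nrm x := by
  have h1 : l.nrm (x n • eSeq n) = |x n| := by
    rw [l.nrm_smul _ (l.mem_e n), l.nrm_e, mul_one]
  rw [← h1]
  refine l.mono (l.mem_smul _ (l.mem_e n)) hx (fun i => ?_)
  by_cases h : i = n
  · subst h; simp [eSeq]
  · simp [eSeq, h]

/-- The `n`-th coordinate as a continuous functional. -/
noncomputable def seqCoord (l : MonoBanachSeqSpace) (n : ℕ) : SeqCarrier l →L[ℝ] ℝ :=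
  LinearMap.mkContinuous ((LinearMap.proj n).comp (seqVal l)) 1 (fun x => by
    rw [one_mul, seq_norm_def, Real.norm_eq_abs]
    exact abs_coord_le l (seqVal_mem l x) n)

lemma seqCoord_apply (l : MonoBanachSeqSpace) (n : ℕ) (x : SeqCarrier l) :
    seqCoord l n x = seqVal l x n := rfl

/-- The unit sequence `e_n` as an element of the sequence space. -/
def seqUnit (l : MonoBanachSeqSpace) (n : ℕ) : SeqCarrier l := seqMk l (eSeq n) (l.mem_e n)

lemma norm_seqUnit (l : MonoBanachSeqSpace) (n : ℕ) : ‖seqUnit l n‖ = 1 := l.nrm_e n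

/-! ### Operators given by bounded multipliers and Baire's theorem -/

open scoped BoundedContinuousFunction

lemma summable_smul_bcf {Y : Type*} [NormedAddCommGroup Y] [NormedSpace ℝ Y] [CompleteSpace Y]
    {g : ℕ → Y} {w : ℕ → ℝ} (hw : Summable w) (hg : ∀ n, ‖g n‖ ≤ w n) (θ : ℕ →ᵇ ℝ) :
    Summable fun n => θ n • g n := by
  refine Summable.of_norm_bounded (hw.mul_left ‖θ‖) (fun n => ?_)
  rw [norm_smul]
  exact mul_le_mul (θ.norm_coe_le_norm n) (hg n) (norm_nonneg _) (norm_nonneg _)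

/-- The map `θ ↦ ∑ θ_n g_n` from `ℓ^∞` to a Banach space, for an absolutely summable `g`. -/
noncomputable def multSum {Y : Type*} [NormedAddCommGroup Y] [NormedSpace ℝ Y] [CompleteSpace Y]
    {g : ℕ → Y} {w : ℕ → ℝ} (hw : Summable w) (hg : ∀ n, ‖g n‖ ≤ w n) :
    (ℕ →ᵇ ℝ) →L[ℝ] Y :=
  LinearMap.mkContinuous
    { toFun := fun θ => ∑' n, θ n • g n
      map_add' := fun θ η => by
        rw [← (summable_smul_bcf hw hg θ).tsum_add (summable_smul_bcf hw hg η)]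
        simp [add_smul]
      map_smul' := fun c θ => by
        rw [RingHom.id_apply, ← (summable_smul_bcf hw hg θ).tsum_const_smul c]
        simp [smul_smul] }
    (∑' n, w n) (fun θ => by
      rw [mul_comm, ← tsum_mul_left]
      refine tsum_of_norm_bounded (hw.mul_left ‖θ‖).hasSum (fun n => ?_)
      rw [norm_smul]
      exact mul_le_mul (θ.norm_coe_le_norm n) (hg n) (norm_nonneg _) (norm_nonneg _))

lemma multSum_apply {Y : Type*} [NormedAddCommGroup Y] [NormedSpace ℝ Y] [CompleteSpace Y]
    {g : ℕ → Y} {w : ℕ → ℝ} (hw : Summable w) (hg : ∀ n, ‖g n‖ ≤ w n) (θ : ℕ →ᵇ ℝ) :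
    multSum hw hg θ = ∑' n, θ n • g n := rfl

lemma norm_multSum_le {Y : Type*} [NormedAddCommGroup Y] [NormedSpace ℝ Y] [CompleteSpace Y]
    {g : ℕ → Y} {w : ℕ → ℝ} (hw : Summable w) (hg : ∀ n, ‖g n‖ ≤ w n) (θ : ℕ →ᵇ ℝ) :
    ‖multSum hw hg θ‖ ≤ ‖θ‖ * ∑' n, w n := by
  rw [multSum_apply, ← tsum_mul_left]
  refine tsum_of_norm_bounded (hw.mul_left ‖θ‖).hasSum (fun n => ?_)
  rw [norm_smul]
  exact mul_le_mul (θ.norm_coe_le_norm n) (hg n) (norm_nonneg _) (norm_nonneg _)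

/-- The unit vector `e_n` of `ℓ^∞`. -/
noncomputable def bcfUnit (n : ℕ) : ℕ →ᵇ ℝ :=
  BoundedContinuousFunction.ofNormedAddCommGroup (fun k => if k = n then (1 : ℝ) else 0)
    continuous_of_discreteTopology 1 (fun k => by split_ifs <;> simp)

lemma bcfUnit_apply (n k : ℕ) : bcfUnit n k = if k = n then (1 : ℝ) else 0 := rfl

lemma norm_bcfUnit_le (n : ℕ) : ‖bcfUnit n‖ ≤ 1 :=
  BoundedContinuousFunction.norm_ofNormedAddCommGroup_le _ zero_le_one _

lemma multSum_unit {Y : Type*} [NormedAddCommGroup Y] [NormedSpace ℝ Y] [CompleteSpace Y]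
    {g : ℕ → Y} {w : ℕ → ℝ} (hw : Summable w) (hg : ∀ n, ‖g n‖ ≤ w n) (n : ℕ) :
    multSum hw hg (bcfUnit n) = g n := by
  rw [multSum_apply, tsum_eq_single n]
  · simp [bcfUnit_apply]
  · intro k hk
    simp [bcfUnit_apply, hk]

/-- Baire's theorem for a family of rank one operators `u_n ⊗ e_{v_n}` whose multiplier sums
`∑ θ_n u_n ⊗ e_{v_n}` are continuous for all bounded `θ`: if continuous operators are bounded,
then some `m` satisfies `sup_n ‖u_n ⊗ e_{v_n}‖_{r_m,m} < ∞`. -/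
lemma exists_uniform_bound {X : Type*} [AddCommGroup X] [Module ℝ X]
    (q : ℕ → Seminorm ℝ X) (l : MonoBanachSeqSpace) (a : ℕ → ℕ → ℝ) (ha : IsKotheMatrix a)
    (hB : ∀ T : X →ₗ[ℝ] (ℕ → ℝ),
        (∀ x, memLamL l a (T x)) →
        (∀ k, ∃ m, opSeminorm (fun _ : X => True) (fun x => q m x) (lamLNorm l a k) T < ⊤) →
        ∃ N, ∀ r, opSeminorm (fun _ : X => True) (fun x => q N x) (lamLNorm l a r) T < ⊤)
    (u : ℕ → X →ₗ[ℝ] ℝ) (v : ℕ → ℕ)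
    (hsum : ∀ k, ∃ M, ∃ w : ℕ → ℝ, Summable w ∧ ∀ n x, |u n x| * a (v n) k ≤ w n * q M x)
    (r : ℕ → ℕ) :
    ∃ m, ∃ K : ℝ, ∀ n x, q m x ≤ 1 → |u n x| * a (v n) (r m) ≤ K := by
  choose M w hw hbd using hsum
  -- the summands of the operator, weighted by `a_v^k`, in the Banach space `ℓ`
  let g : ℕ → X → ℕ → SeqCarrier l := fun k x n => (u n x * a (v n) k) • seqUnit l (v n)
  have hgn : ∀ k x n, ‖g k x n‖ = |u n x| * a (v n) k := by
    intro k x n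
    simp only [g]
    rw [norm_smul, norm_seqUnit, mul_one, Real.norm_eq_abs, abs_mul, abs_of_pos (ha _ _).1]
  have hg : ∀ k x n, ‖g k x n‖ ≤ w k n * q (M k) x := fun k x n => (hgn k x n).trans_le (hbd k n x)
  have hws : ∀ k x, Summable fun n => w k n * q (M k) x := fun k x => (hw k).mul_right _
  let Φ : ℕ → X → (ℕ →ᵇ ℝ) →L[ℝ] SeqCarrier l := fun k x => multSum (hws k x) (hg k x)
  have hterm : ∀ k x (θ : ℕ →ᵇ ℝ) i n, seqCoord l i (θ n • g k x n)
      = θ n * u n x * eSeq (v n) i * a i k := by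
    intro k x θ i n
    have : seqVal l (seqUnit l (v n)) = eSeq (v n) := rfl
    simp only [g, map_smul, seqCoord_apply, this, smul_eq_mul, eSeq]
    split_ifs with h
    · subst h; ring
    · ring
  have hcs : ∀ x (θ : ℕ →ᵇ ℝ) i, Summable fun n => θ n * u n x * eSeq (v n) i := by
    intro x θ i
    have h := (summable_smul_bcf (hws 0 x) (hg 0 x) θ).mapL (seqCoord l i)
    simp only [hterm] at h
    exact (summable_mul_right_iff (ha i 0).1.ne').1 h
  let T : (ℕ →ᵇ ℝ) → X →ₗ[ℝ] (ℕ → ℝ) := fun θ =>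
    { toFun := fun x i => ∑' n, θ n * u n x * eSeq (v n) i
      map_add' := fun x y => by
        funext i
        rw [Pi.add_apply, ← (hcs x θ i).tsum_add (hcs y θ i)]
        congr 1
        funext n
        rw [map_add]; ring
      map_smul' := fun t x => by
        funext i
        rw [RingHom.id_apply, Pi.smul_apply, smul_eq_mul, ← tsum_mul_left]
        congr 1
        funext n
        rw [map_smul, smul_eq_mul]; ring }
  have hT : ∀ θ k x, (fun i => T θ x i * a i k) = seqVal l (Φ k x θ) := by
    intro θ k x
    funext i
    rw [← seqCoord_apply]
    simp only [Φ]
    rw [multSum_apply, (seqCoord l i).map_tsum (summable_smul_bcf (hws k x) (hg k x) θ)]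
    simp only [hterm, tsum_mul_right]
    rfl
  have hTn : ∀ θ k x, lamLNorm l a k (T θ x) = ‖Φ k x θ‖ := by
    intro θ k x
    rw [lamLNorm, hT, seq_norm_def]
  have hbdd : ∀ θ : ℕ →ᵇ ℝ, ∃ m, ∀ r,
      opSeminorm (fun _ : X => True) (fun x => q m x) (lamLNorm l a r) (T θ) < ⊤ := by
    intro θ
    apply hB (T θ)
    · intro x k
      rw [hT]
      exact seqVal_mem l _
    · intro k
      refine ⟨M k, lt_of_le_of_lt (iSup_le (a := ENNReal.ofReal (‖θ‖ * ∑' n, |w k n|)) ?_)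
        ENNReal.ofReal_lt_top⟩
      rintro ⟨x, -, hx⟩
      apply ENNReal.ofReal_le_ofReal
      rw [hTn]
      refine (norm_multSum_le (hws k x) (hg k x) θ).trans ?_
      refine mul_le_mul_of_nonneg_left ?_ (norm_nonneg _)
      refine (hws k x).tsum_le_tsum (fun n => ?_) (hw k).abs
      calc w k n * q (M k) x ≤ |w k n| * q (M k) x :=
            mul_le_mul_of_nonneg_right (le_abs_self _) (apply_nonneg _ _)
        _ ≤ |w k n| * 1 := mul_le_mul_of_nonneg_left hx (abs_nonneg _)
        _ = |w k n| := mul_one _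
  let S : ℕ × ℕ → Set (ℕ →ᵇ ℝ) := fun mk => {θ | ∀ x, q mk.1 x ≤ 1 → ‖Φ (r mk.1) x θ‖ ≤ mk.2}
  have hSc : ∀ mk, IsClosed (S mk) := by
    intro mk
    simp only [S, Set.ofPred_forall]
    exact isClosed_iInter fun x => isClosed_iInter fun _ =>
      isClosed_le (Φ (r mk.1) x).continuous.norm continuous_const
  have hSU : ⋃ mk, S mk = Set.univ := by
    rw [Set.eq_univ_iff_forall]
    intro θ
    obtain ⟨m, hm⟩ := hbdd θ
    obtain ⟨K, hK⟩ := exists_nat_ge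
      (opSeminorm (fun _ : X => True) (fun x => q m x) (lamLNorm l a (r m)) (T θ)).toReal
    refine Set.mem_iUnion.2 ⟨(m, K), fun x hx => ?_⟩
    refine le_trans ?_ hK
    rw [← hTn]
    refine (ENNReal.ofReal_le_iff_le_toReal (hm (r m)).ne).1 ?_
    exact le_iSup (fun x : {x : X // True ∧ q m x ≤ 1} =>
      ENNReal.ofReal (lamLNorm l a (r m) (T θ x.1))) ⟨x, trivial, hx⟩
  obtain ⟨⟨m, K⟩, θ₀, hθ₀⟩ := nonempty_interior_of_iUnion_of_closed hSc hSU
  rw [mem_interior_iff_mem_nhds, Metric.mem_nhds_iff] at hθ₀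
  obtain ⟨ε, hε, hball⟩ := hθ₀
  refine ⟨m, 2 * K / (ε / 2), fun n x hx => ?_⟩
  have h0 : ‖Φ (r m) x θ₀‖ ≤ K := hball (Metric.mem_ball_self hε) x hx
  have h1 : ‖Φ (r m) x (θ₀ + (ε / 2) • bcfUnit n)‖ ≤ K := by
    refine hball ?_ x hx
    rw [Metric.mem_ball, dist_eq_norm, add_sub_cancel_left, norm_smul, Real.norm_eq_abs,
      abs_of_pos (half_pos hε)]
    have := norm_bcfUnit_le n
    nlinarith
  have h2 : Φ (r m) x (θ₀ + (ε / 2) • bcfUnit n) - Φ (r m) x θ₀ = (ε / 2) • g (r m) x n := by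
    rw [map_add, map_smul, add_sub_cancel_left]
    simp only [Φ, multSum_unit]
  have h3 : (ε / 2) * (|u n x| * a (v n) (r m)) ≤ 2 * K := by
    rw [← hgn, ← abs_of_pos (half_pos hε), ← Real.norm_eq_abs, ← norm_smul, ← h2]
    refine (norm_sub_le _ _).trans ?_
    linarith
  rw [le_div_iff₀ (half_pos hε)]
  linarith

/-! ### The estimate for rank one operators -/

lemma IsKotheMatrix.mono {a : ℕ → ℕ → ℝ} (ha : IsKotheMatrix a) (n : ℕ) : Monotone (a n) :=
  monotone_nat_of_le_succ fun k => (ha n k).2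

lemma abs_le_mul_seminorm {X : Type*} [AddCommGroup X] [Module ℝ X] (q : Seminorm ℝ X)
    (u : X →ₗ[ℝ] ℝ) {D : ℝ} (h : ∀ x, q x ≤ 1 → |u x| ≤ D) (x : X) : |u x| ≤ D * q x := by
  have hD : 0 ≤ D := by simpa using h 0 (by simp)
  have key : ∀ t : ℝ, q x < t → |u x| ≤ D * t := by
    intro t ht
    have ht0 : 0 < t := (apply_nonneg q x).trans_lt ht
    have := h (t⁻¹ • x) (by
      rw [map_smul_eq_mul, Real.norm_eq_abs, abs_of_pos (inv_pos.2 ht0), inv_mul_le_iff₀ ht0]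
      linarith)
    rw [map_smul, smul_eq_mul, abs_mul, abs_of_pos (inv_pos.2 ht0), inv_mul_le_iff₀ ht0] at this
    linarith
  -- `q x` may vanish, so the bound is obtained as a limit of the bounds for `t > q x`
  have hc : Filter.Tendsto (fun t : ℝ => D * t) (nhdsWithin (q x) (Set.Ioi (q x)))
      (nhds (D * q x)) :=
    ((continuous_const.mul continuous_id).tendsto _).mono_left nhdsWithin_le_nhds
  exact ge_of_tendsto hc (Filter.eventually_of_mem self_mem_nhdsWithin fun t ht => key t ht)

/-- If the estimate with constant `4 ^ n` fails for `u ⊗ e_v`, a multiple of `u` has norms at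
most `2 ^ (-n)` on the right-hand side, and norm at least `2 ^ n`, attained at `x`, on the left. -/
lemma rescale {X : Type*} [AddCommGroup X] [Module ℝ X] (q : ℕ → Seminorm ℝ X)
    (N : ℕ → ℕ) (α : ℕ → ℝ) (hα : ∀ k, 0 < α k) (m r n : ℕ) (u : X →ₗ[ℝ] ℝ)
    (h : ∀ k ∈ Finset.Icc 1 (n + 1), ENNReal.ofReal (4 ^ n) *
      (dualNorm q (N k) u * ENNReal.ofReal (α k)) < ENNReal.ofReal (α r) * dualNorm q m u) :
    ∃ u' : X →ₗ[ℝ] ℝ, (∃ x, q m x ≤ 1 ∧ 2 ^ n ≤ |u' x| * α r) ∧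
      ∀ k ∈ Finset.Icc 1 (n + 1), ∀ x, |u' x| * α k ≤ (1 / 2) ^ n * q (N k) x := by
  obtain ⟨k₀, hk₀, hmax⟩ := Finset.exists_max_image (Finset.Icc 1 (n + 1))
    (fun k => dualNorm q (N k) u * ENNReal.ofReal (α k)) ⟨1, by simp⟩
  have h0 := h k₀ hk₀
  rw [dualNorm.eq_def q m, ENNReal.mul_iSup, lt_iSup_iff] at h0
  obtain ⟨⟨x₀, hx₀⟩, h0⟩ := h0
  rw [← ENNReal.ofReal_mul (hα r).le] at h0
  set y := α r * |u x₀| with hy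
  have hypos : 0 < y := ENNReal.ofReal_pos.1 (bot_le.trans_lt h0)
  have hk : ∀ k ∈ Finset.Icc 1 (n + 1), ∀ x, 4 ^ n * (|u x| * α k) ≤ y * q (N k) x := by
    intro k hk x
    have hb : ∀ x, q (N k) x ≤ 1 → |u x| ≤ y / (4 ^ n * α k) := by
      intro x hx
      have h1 : ENNReal.ofReal |u x| ≤ dualNorm q (N k) u :=
        le_iSup (fun x : {x : X // q (N k) x ≤ 1} => ENNReal.ofReal |u x.1|) ⟨x, hx⟩
      have h2 : ENNReal.ofReal (4 ^ n * (|u x| * α k)) ≤ ENNReal.ofReal y := by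
        rw [ENNReal.ofReal_mul (by positivity), ENNReal.ofReal_mul (abs_nonneg _)]
        refine le_trans ?_ h0.le
        refine mul_le_mul_right ?_ _
        exact (mul_le_mul_left h1 _).trans (hmax k hk)
      rw [ENNReal.ofReal_le_ofReal_iff hypos.le] at h2
      rw [le_div_iff₀ (mul_pos (by positivity) (hα k))]
      linarith
    have := abs_le_mul_seminorm (q (N k)) u hb x
    rw [div_mul_eq_mul_div, le_div_iff₀ (mul_pos (by positivity) (hα k))] at this
    linarith
  have habs : ∀ x, |((2 ^ n / y) • u) x| = 2 ^ n / y * |u x| := by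
    intro x
    rw [LinearMap.smul_apply, smul_eq_mul, abs_mul, abs_of_pos (by positivity)]
  refine ⟨(2 ^ n / y) • u, ⟨x₀, hx₀, ?_⟩, fun k hk' x => ?_⟩
  · rw [habs, mul_assoc, mul_comm |u x₀|, ← hy, div_mul_cancel₀ _ hypos.ne']
  · have h1 := hk k hk' x
    have h4 : (4 : ℝ) ^ n = 2 ^ n * 2 ^ n := by rw [← mul_pow]; norm_num
    rw [h4] at h1
    rw [habs, one_div, inv_pow, mul_assoc, div_mul_eq_mul_div, div_le_iff₀ hypos,
      mul_assoc, le_inv_mul_iff₀ (by positivity)]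
    linarith

/-- Vogt's necessary condition for all continuous operators to be bounded, in the form it takes
for the rank one operators `u ⊗ e_v`. -/
lemma rank_one_estimate {X : Type*} [AddCommGroup X] [Module ℝ X]
    (q : ℕ → Seminorm ℝ X) (hq : ∀ k x, q k x ≤ q (k + 1) x)
    (l : MonoBanachSeqSpace) (a : ℕ → ℕ → ℝ) (ha : IsKotheMatrix a)
    (hB : ∀ T : X →ₗ[ℝ] (ℕ → ℝ),
        (∀ x, memLamL l a (T x)) →
        (∀ k, ∃ m, opSeminorm (fun _ : X => True) (fun x => q m x) (lamLNorm l a k) T < ⊤) →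
        ∃ N, ∀ r, opSeminorm (fun _ : X => True) (fun x => q N x) (lamLNorm l a r) T < ⊤)
    (N : ℕ → ℕ) (hN : Monotone N) :
    ∃ m : ℕ, ∀ r : ℕ, ∃ s : ℕ, 1 ≤ s ∧ ∃ C : ℝ, 0 < C ∧ ∀ (v : ℕ) (u : X →ₗ[ℝ] ℝ),
      ∃ k ∈ Finset.Icc 1 s, ENNReal.ofReal (a v r) * dualNorm q m u ≤
        ENNReal.ofReal C * (dualNorm q (N k) u * ENNReal.ofReal (a v k)) := by
  by_contra hcon
  push Not at hcon
  choose r hr using hcon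
  -- the first component of `n` is the index `m` at which the `n`-th operator is large
  have step : ∀ n : ℕ, ∃ (v : ℕ) (u : X →ₗ[ℝ] ℝ),
      (∃ x, q n.unpair.1 x ≤ 1 ∧ 2 ^ n ≤ |u x| * a v (r n.unpair.1)) ∧
      ∀ k ∈ Finset.Icc 1 (n + 1), ∀ x, |u x| * a v k ≤ (1 / 2) ^ n * q (N k) x := by
    intro n
    obtain ⟨v, u, h⟩ := hr n.unpair.1 (n + 1) (by omega) (4 ^ n) (by positivity)
    obtain ⟨u', h'⟩ := rescale q N (a v) (fun k => (ha v k).1) n.unpair.1 _ n u h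
    exact ⟨v, u', h'⟩
  choose v u hbig hsmall using step
  have hqm : ∀ x, Monotone fun k => q k x := fun x => monotone_nat_of_le_succ fun k => hq k x
  obtain ⟨m, K, hK⟩ := exists_uniform_bound q l a ha hB u v (by
    intro k
    refine ⟨N (k + 1), fun n => if k ≤ n then (1 / 2) ^ n
      else (1 / 2) ^ n * (a (v n) (k + 1) / a (v n) 1), ?_, ?_⟩
    · refine (summable_congr_atTop ?_).1 summable_geometric_two
      filter_upwards [Filter.eventually_ge_atTop k] with n hn
      rw [if_pos hn]
    · intro n x
      have hk1 : |u n x| * a (v n) k ≤ |u n x| * a (v n) (k + 1) :=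
        mul_le_mul_of_nonneg_left (ha _ _).2 (abs_nonneg _)
      refine hk1.trans ?_
      beta_reduce
      split_ifs with h
      · exact hsmall n (k + 1) (by simp; omega) x
      · have h1 := hsmall n 1 (by simp) x
        have h2 : q (N 1) x ≤ q (N (k + 1)) x := hqm x (hN (by omega))
        have hpos := (ha (v n) 1).1
        have hpos' := (ha (v n) (k + 1)).1
        calc |u n x| * a (v n) (k + 1)
            = (|u n x| * a (v n) 1) * (a (v n) (k + 1) / a (v n) 1) := by field_simp
          _ ≤ ((1 / 2) ^ n * q (N (k + 1)) x) * (a (v n) (k + 1) / a (v n) 1) := by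
              refine mul_le_mul_of_nonneg_right (h1.trans ?_) (by positivity)
              exact mul_le_mul_of_nonneg_left h2 (by positivity)
          _ = _ := by ring) r
  obtain ⟨t, ht⟩ := exists_nat_gt K
  obtain ⟨x, hx, hx'⟩ := hbig (Nat.pair m t)
  rw [Nat.unpair_pair] at hx hx'
  have h1 := hK (Nat.pair m t) x hx
  have h2 : (t : ℝ) ≤ 2 ^ Nat.pair m t := by
    exact_mod_cast (Nat.right_le_pair m t).trans Nat.lt_two_pow_self.le
  simp only at hx'
  linarith

/-! ### Köthe spaces as domains -/

/-- The `ℓ`-Köthe space as a submodule of `ℝ^ℕ`. -/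
def lamSub (l : MonoBanachSeqSpace) (b : ℕ → ℕ → ℝ) : Submodule ℝ (ℕ → ℝ) where
  carrier := {x | memLamL l b x}
  zero_mem' := fun k => by
    convert l.mem_zero using 1
    funext n
    simp
  add_mem' := fun {x y} hx hy k => by
    convert l.mem_add (hx k) (hy k) using 1
    funext n
    simp [add_mul]
  smul_mem' := fun c x hx k => by
    convert l.mem_smul c (hx k) using 1
    funext n
    simp [mul_assoc]

/-- The `k`-th seminorm of the `ℓ`-Köthe space as a `Seminorm`. -/
noncomputable def lamSeminorm (l : MonoBanachSeqSpace) (b : ℕ → ℕ → ℝ) (k : ℕ) :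
    Seminorm ℝ (lamSub l b) :=
  Seminorm.of (fun x => lamLNorm l b k x.1)
    (fun x y => by
      have : (fun n => (x + y).1 n * b n k) = (fun n => x.1 n * b n k) + fun n => y.1 n * b n k := by
        funext n; simp [add_mul]
      simp only [lamLNorm, this]
      exact l.nrm_add_le (x.2 k) (y.2 k))
    (fun c x => by
      have : (fun n => (c • x).1 n * b n k) = c • fun n => x.1 n * b n k := by
        funext n; simp [mul_assoc]
      simp only [lamLNorm, this]
      rw [l.nrm_smul c (x.2 k), Real.norm_eq_abs])

lemma lamSeminorm_apply (l : MonoBanachSeqSpace) (b : ℕ → ℕ → ℝ) (k : ℕ) (x : lamSub l b) :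
    lamSeminorm l b k x = lamLNorm l b k x.1 := rfl

lemma eSeq_mul (i : ℕ) (β : ℕ → ℝ) : (fun n => eSeq i n * β n) = β i • eSeq i := by
  funext n
  by_cases h : n = i
  · subst h; simp [eSeq]
  · simp [eSeq, h]

lemma memLamL_eSeq (l : MonoBanachSeqSpace) (b : ℕ → ℕ → ℝ) (i : ℕ) : memLamL l b (eSeq i) :=
  fun k => by
    rw [eSeq_mul i fun n => b n k]
    exact l.mem_smul _ (l.mem_e i)

lemma lamLNorm_eSeq (l : MonoBanachSeqSpace) {b : ℕ → ℕ → ℝ} (hb : IsKotheMatrix b) (i k : ℕ) :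
    lamLNorm l b k (eSeq i) = b i k := by
  rw [lamLNorm, eSeq_mul i fun n => b n k, l.nrm_smul _ (l.mem_e i), l.nrm_e, mul_one,
    abs_of_pos (hb i k).1]

/-- The `i`-th coordinate functional on the `ℓ`-Köthe space. -/
def lamCoord (l : MonoBanachSeqSpace) (b : ℕ → ℕ → ℝ) (i : ℕ) : lamSub l b →ₗ[ℝ] ℝ :=
  (LinearMap.proj i).comp (lamSub l b).subtype

lemma dualNorm_lamCoord (l : MonoBanachSeqSpace) {b : ℕ → ℕ → ℝ} (hb : IsKotheMatrix b)
    (i k : ℕ) : dualNorm (lamSeminorm l b) k (lamCoord l b i) = ENNReal.ofReal (b i k)⁻¹ := by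
  have hpos := (hb i k).1
  apply le_antisymm
  · refine iSup_le ?_
    rintro ⟨x, hx⟩
    apply ENNReal.ofReal_le_ofReal
    have h := (abs_coord_le l (x.2 k) i).trans hx
    rw [abs_mul, abs_of_pos hpos] at h
    rw [← one_div, le_div_iff₀ hpos]
    exact h
  · let x : lamSub l b := (b i k)⁻¹ • ⟨eSeq i, memLamL_eSeq l b i⟩
    have hx : lamSeminorm l b k x ≤ 1 := by
      simp only [x]
      rw [map_smul_eq_mul, lamSeminorm_apply, lamLNorm_eSeq l hb, Real.norm_eq_abs,
        abs_of_pos (inv_pos.2 hpos), inv_mul_cancel₀ hpos.ne']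
    have hv : |lamCoord l b i x| = (b i k)⁻¹ := by
      simp [x, lamCoord, eSeq, abs_of_pos hpos]
    rw [← hv]
    exact le_iSup (fun x : {x : lamSub l b // lamSeminorm l b k x ≤ 1} =>
      ENNReal.ofReal |lamCoord l b i x.1|) ⟨x, hx⟩

/-- `rank_one_estimate` for a pair of Köthe spaces and the operators `e_i′ ⊗ e_j`. -/
lemma kothe_estimate (b c : ℕ → ℕ → ℝ) (hb : IsKotheMatrix b) (hc : IsKotheMatrix c)
    (l2 l3 : MonoBanachSeqSpace)
    (hB2 : ∀ R : (ℕ → ℝ) → (ℕ → ℝ),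
        (∀ z, memLamL l2 b z → memLamL l3 c (R z)) →
        (∀ z w, memLamL l2 b z → memLamL l2 b w → R (z + w) = R z + R w) →
        (∀ (t : ℝ) (z), memLamL l2 b z → R (t • z) = t • R z) →
        (∀ k, ∃ m, opSeminorm (memLamL l2 b) (lamLNorm l2 b m) (lamLNorm l3 c k) R < ⊤) →
        ∃ N, ∀ r, opSeminorm (memLamL l2 b) (lamLNorm l2 b N) (lamLNorm l3 c r) R < ⊤)
    (N : ℕ → ℕ) (hN : Monotone N) :
    ∃ m : ℕ, ∀ r : ℕ, ∃ s : ℕ, 1 ≤ s ∧ ∃ C : ℝ, 0 < C ∧ ∀ j i : ℕ,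
      ∃ k ∈ Finset.Icc 1 s, c j r / b i m ≤ C * (c j k / b i (N k)) := by
  classical
  obtain ⟨m, hm⟩ := rank_one_estimate (lamSeminorm l2 b)
    (fun k x => by
      refine l2.mono (x.2 k) (x.2 (k + 1)) fun n => ?_
      rw [abs_mul, abs_mul, abs_of_pos (hb n k).1, abs_of_pos (hb n (k + 1)).1]
      exact mul_le_mul_of_nonneg_left (hb n k).2 (abs_nonneg _))
    l3 c hc
    (by
      intro T hT hcont
      let R : (ℕ → ℝ) → (ℕ → ℝ) := fun z => if h : memLamL l2 b z then T ⟨z, h⟩ else 0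
      have hR : ∀ z (h : memLamL l2 b z), R z = T ⟨z, h⟩ := fun z h => dif_pos h
      have hop : ∀ m k, opSeminorm (memLamL l2 b) (lamLNorm l2 b m) (lamLNorm l3 c k) R
          = opSeminorm (fun _ => True) (fun x => lamSeminorm l2 b m x) (lamLNorm l3 c k) T := by
        intro m k
        apply le_antisymm
        · refine iSup_le ?_
          rintro ⟨z, hz, hz1⟩
          rw [hR z hz]
          exact le_iSup (fun x : {x : lamSub l2 b // True ∧ lamSeminorm l2 b m x ≤ 1} =>
            ENNReal.ofReal (lamLNorm l3 c k (T x.1))) ⟨⟨z, hz⟩, trivial, hz1⟩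
        · refine iSup_le ?_
          rintro ⟨⟨z, hz⟩, -, hz1⟩
          rw [← hR z hz]
          exact le_iSup (fun x : {x : ℕ → ℝ // memLamL l2 b x ∧ lamLNorm l2 b m x ≤ 1} =>
            ENNReal.ofReal (lamLNorm l3 c k (R x.1))) ⟨z, hz, hz1⟩
      have := hB2 R (fun z hz => by rw [hR z hz]; exact hT _)
        (fun z w hz hw => by
          rw [hR z hz, hR w hw, hR (z + w) ((lamSub l2 b).add_mem hz hw), ← map_add]; rfl)
        (fun t z hz => by
          rw [hR z hz, hR (t • z) ((lamSub l2 b).smul_mem t hz), ← map_smul]; rfl)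
        (by simpa only [hop] using hcont)
      simpa only [hop] using this)
    N hN
  refine ⟨m, fun r => ?_⟩
  obtain ⟨s, hs, C, hC, h⟩ := hm r
  refine ⟨s, hs, C, hC, fun j i => ?_⟩
  obtain ⟨k, hk, hk'⟩ := h j (lamCoord l2 b i)
  refine ⟨k, hk, ?_⟩
  have hbk := (hb i (N k)).1
  have hck := (hc j k).1
  rw [dualNorm_lamCoord l2 hb, dualNorm_lamCoord l2 hb, ← ENNReal.ofReal_mul (hc j r).1.le,
    ← ENNReal.ofReal_mul (by positivity), ← ENNReal.ofReal_mul hC.le,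
    ENNReal.ofReal_le_ofReal_iff (by positivity)] at hk'
  rw [div_eq_mul_inv, div_eq_mul_inv, mul_comm (c j k)]
  exact hk'

/-! ### The combined estimate -/

/-- key estimate in the proof of Theorem 5. Assume `B` satisfies the
Grothendieck–Pietsch condition, `(E, λ^{ℓ₁}(A)) ∈ 𝓑` and `(λ^{ℓ₂}(B), λ^{ℓ₃}(C)) ∈ 𝓑`. Then
for every non-decreasing `N : ℕ → ℕ` there is `m` such that for each `r` there are `s` and
`C₀ > 0` with
`c_j^r ‖u‖*_m ≤ C₀ · (max_{1≤k≤s} c_j^k/(a_v^{N(k)} b_i^{N(k)})) · (max_{1≤k≤s} ‖u‖*_{N(k)} a_v^k b_i^k)`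
for all `j`, `v`, `i` and all `u ∈ E′`. -/
theorem tensor_BF_estimate
    {E : Type*} [AddCommGroup E] [Module ℝ E]
    (p : ℕ → Seminorm ℝ E)
    (hpmono : ∀ k x, p k x ≤ p (k + 1) x)
    (hHaus : ∀ x : E, (∀ k, p k x = 0) → x = 0)
    (hComplete : ∀ u : ℕ → E,
      (∀ k, ∀ ε : ℝ, 0 < ε → ∃ M, ∀ i j, M ≤ i → M ≤ j → p k (u i - u j) < ε) →
      ∃ x : E, ∀ k, ∀ ε : ℝ, 0 < ε → ∃ M, ∀ i, M ≤ i → p k (u i - x) < ε)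
    (a b c : ℕ → ℕ → ℝ)
    (ha : IsKotheMatrix a) (hb : IsKotheMatrix b) (hc : IsKotheMatrix c)
    (l1 l2 l3 : MonoBanachSeqSpace)
    (hGPb : ∀ k, ∃ m, Summable fun i => b i k / b i m)
    (hB1 : ∀ T : E →ₗ[ℝ] (ℕ → ℝ),
        (∀ x, memLamL l1 a (T x)) →
        (∀ k, ∃ m, opSeminorm (fun _ : E => True) (fun x => p m x) (lamLNorm l1 a k) T < ⊤) →
        ∃ N, ∀ r, opSeminorm (fun _ : E => True) (fun x => p N x) (lamLNorm l1 a r) T < ⊤)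
    (hB2 : ∀ R : (ℕ → ℝ) → (ℕ → ℝ),
        (∀ z, memLamL l2 b z → memLamL l3 c (R z)) →
        (∀ z w, memLamL l2 b z → memLamL l2 b w → R (z + w) = R z + R w) →
        (∀ (t : ℝ) (z), memLamL l2 b z → R (t • z) = t • R z) →
        (∀ k, ∃ m, opSeminorm (memLamL l2 b) (lamLNorm l2 b m) (lamLNorm l3 c k) R < ⊤) →
        ∃ N, ∀ r, opSeminorm (memLamL l2 b) (lamLNorm l2 b N) (lamLNorm l3 c r) R < ⊤) :
    ∀ N : ℕ → ℕ, Monotone N → ∃ m : ℕ, ∀ r : ℕ, ∃ s : ℕ, 1 ≤ s ∧ ∃ C₀ : ℝ, 0 < C₀ ∧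
      ∀ (j v i : ℕ) (u : E →ₗ[ℝ] ℝ), (∃ k, ∃ C' : ℝ, ∀ x, |u x| ≤ C' * p k x) →
        ENNReal.ofReal (c j r) * dualNorm p m u ≤
          ENNReal.ofReal C₀ *
            ((Finset.Icc 1 s).sup fun k =>
              ENNReal.ofReal (c j k / (a v (N k) * b i (N k)))) *
            ((Finset.Icc 1 s).sup fun k =>
              dualNorm p (N k) u * ENNReal.ofReal (a v k * b i k)) := by
  intro N hN
  obtain ⟨m, hm⟩ := kothe_estimate b c hb hc l2 l3 hB2 N hN
  obtain ⟨m', hm'⟩ := rank_one_estimate p hpmono l1 a ha hB1 (fun k => N (max k m))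
    (fun k k' h => hN (max_le_max_right m h))
  refine ⟨m', fun r => ?_⟩
  obtain ⟨s, hs, C2, hC2, h2⟩ := hm r
  obtain ⟨s', hs', C1, hC1, h1⟩ := hm' (N s)
  refine ⟨max (max s s') m, by omega, C1 * C2, mul_pos hC1 hC2, fun j v i u _ => ?_⟩
  obtain ⟨k, hk, hk2⟩ := h2 j i
  obtain ⟨k', hk', hk1⟩ := h1 v u
  rw [Finset.mem_Icc] at hk hk'
  set K := max k' m with hKdef
  have hbm := (hb i m).1
  have hbN := (hb i (N k)).1
  have haN := (ha v (N k)).1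
  have hck := (hc j k).1
  have hX : ENNReal.ofReal (c j k / (a v (N k) * b i (N k))) ≤
      (Finset.Icc 1 (max (max s s') m)).sup fun k =>
        ENNReal.ofReal (c j k / (a v (N k) * b i (N k))) :=
    Finset.le_sup (f := fun k => ENNReal.ofReal (c j k / (a v (N k) * b i (N k))))
      (Finset.mem_Icc.2 ⟨hk.1, by omega⟩)
  have hY : dualNorm p (N K) u * ENNReal.ofReal (a v K * b i K) ≤
      (Finset.Icc 1 (max (max s s') m)).sup fun k =>
        dualNorm p (N k) u * ENNReal.ofReal (a v k * b i k) :=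
    Finset.le_sup (f := fun k => dualNorm p (N k) u * ENNReal.ofReal (a v k * b i k))
      (Finset.mem_Icc.2 ⟨by omega, by omega⟩)
  have hcr : c j r ≤ C2 * (c j k / (a v (N k) * b i (N k))) * b i m * a v (N s) := by
    rw [div_le_iff₀ hbm] at hk2
    have haa : a v (N k) ≤ a v (N s) := ha.mono v (hN hk.2)
    calc c j r ≤ C2 * (c j k / b i (N k)) * b i m := hk2
      _ = C2 * (c j k / (a v (N k) * b i (N k))) * b i m * a v (N k) := by field_simp
      _ ≤ _ := mul_le_mul_of_nonneg_left haa (by positivity)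
  have hab : a v k' * b i m ≤ a v K * b i K :=
    mul_le_mul (ha.mono v (le_max_left _ _)) (hb.mono i (le_max_right _ _)) hbm.le (ha v K).1.le
  calc ENNReal.ofReal (c j r) * dualNorm p m' u
      ≤ ENNReal.ofReal (C2 * (c j k / (a v (N k) * b i (N k))) * b i m * a v (N s))
          * dualNorm p m' u := by
        gcongr
    _ = ENNReal.ofReal C2 * ENNReal.ofReal (c j k / (a v (N k) * b i (N k)))
          * ENNReal.ofReal (b i m) * (ENNReal.ofReal (a v (N s)) * dualNorm p m' u) := by
        rw [ENNReal.ofReal_mul (by positivity), ENNReal.ofReal_mul (by positivity),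
          ENNReal.ofReal_mul (by positivity)]
        ring
    _ ≤ ENNReal.ofReal C2 * ENNReal.ofReal (c j k / (a v (N k) * b i (N k)))
          * ENNReal.ofReal (b i m) *
          (ENNReal.ofReal C1 * (dualNorm p (N K) u * ENNReal.ofReal (a v k'))) := by
        gcongr
    _ = ENNReal.ofReal (C1 * C2) * ENNReal.ofReal (c j k / (a v (N k) * b i (N k))) *
          (dualNorm p (N K) u * ENNReal.ofReal (a v k' * b i m)) := by
        rw [ENNReal.ofReal_mul hC1.le, ENNReal.ofReal_mul (ha v k').1.le]
        ring
    _ ≤ ENNReal.ofReal (C1 * C2) * ENNReal.ofReal (c j k / (a v (N k) * b i (N k))) *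
          (dualNorm p (N K) u * ENNReal.ofReal (a v K * b i K)) := by
        gcongr
    _ ≤ _ := by gcongr
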